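/- arXiv:1804.08373 — 4 statements merged into one kernel-verified Lean document; each statement's English description precedes it below -/
import Mathlib

section
/- A term t of the calculus λ_S is stuck (i.e., t is not a value and there is no t' with t →_v t') if and only if either t = E[S k.t'] for some pure evaluation context E, variable k and term t', or t = F[x v] for some evaluation context F, variable x and value v. -/
namespace LambdaS

/-- Terms of the calculus λ_S: variables, λ-abstractions, applications,
the shift operator `S k.t`, and the reset delimiter `⟨t⟩`. -/
inductive Tm : Type
  | var : ℕ → Tm
  | lam : ℕ → Tm → Tm
  | app : Tm → Tm → Tm
  | shift : ℕ → Tm → Tm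
  | reset : Tm → Tm
  deriving DecidableEq

/-- A variable fresh for a finite set of variables. -/
def fresh (s : Finset ℕ) : ℕ := if h : s.Nonempty then s.max' h + 1 else 0

namespace Tm

/-- Free variables. -/
def fv : Tm → Finset ℕ
  | var x => {x}
  | lam x t => fv t \ {x}
  | app t u => fv t ∪ fv u
  | shift k t => fv t \ {k}
  | reset t => fv t

def size : Tm → ℕ
  | var _ => 1
  | lam _ t => size t + 1
  | app t u => size t + size u + 1
  | shift _ t => size t + 1
  | reset t => size t + 1

/-- Renaming of free occurrences of a variable (used for α-renaming with a
fresh target variable). -/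
def rename : Tm → ℕ → ℕ → Tm
  | var w, y, z => if w = y then var z else var w
  | lam w t, y, z => if w = y then lam w t else lam w (rename t y z)
  | app t u, y, z => app (rename t y z) (rename u y z)
  | shift w t, y, z => if w = y then shift w t else shift w (rename t y z)
  | reset t, y, z => reset (rename t y z)

theorem size_rename (t : Tm) (y z : ℕ) : size (rename t y z) = size t := by
  induction t generalizing y z with
  | var w => simp only [rename]; split <;> rfl
  | lam w t ih => simp only [rename]; split <;> simp [size, ih]
  | app t u iht ihu => simp [rename, size, iht, ihu]
  | shift w t ih => simp only [rename]; split <;> simp [size, ih]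
  | reset t ih => simp [rename, size, ih]

/-- Capture-avoiding substitution `t{v/x}` of `v` for the free occurrences of
`x` in `t`; bound variables are α-renamed when needed. -/
def subst : Tm → ℕ → Tm → Tm
  | var w, x, v => if w = x then v else var w
  | lam y t, x, v =>
      if y = x then lam y t
      else if y ∈ fv v then
        lam (fresh (fv v ∪ fv t ∪ {x}))
          (subst (rename t y (fresh (fv v ∪ fv t ∪ {x}))) x v)
      else lam y (subst t x v)
  | app t u, x, v => app (subst t x v) (subst u x v)
  | shift y t, x, v =>
      if y = x then shift y t
      else if y ∈ fv v then
        shift (fresh (fv v ∪ fv t ∪ {x}))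
          (subst (rename t y (fresh (fv v ∪ fv t ∪ {x}))) x v)
      else shift y (subst t x v)
  | reset t, x, v => reset (subst t x v)
termination_by t _ _ => size t
decreasing_by all_goals simp [size_rename, size] <;> omega

end Tm

/-- Values: variables and λ-abstractions. -/
inductive IsValue : Tm → Prop
  | var (x : ℕ) : IsValue (Tm.var x)
  | lam (x : ℕ) (t : Tm) : IsValue (Tm.lam x t)

/-- A term is closed if it has no free variables. -/
def Closed (t : Tm) : Prop := t.fv = ∅

/-- Pure evaluation contexts E ::= □ | v E | E t. -/
inductive ECtx : Type
  | hole : ECtx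
  | appR : (v : Tm) → IsValue v → ECtx → ECtx
  | appL : ECtx → Tm → ECtx

def ECtx.plug : ECtx → Tm → Tm
  | .hole, t => t
  | .appR v _ E, t => Tm.app v (E.plug t)
  | .appL E u, t => Tm.app (E.plug t) u

def ECtx.fv : ECtx → Finset ℕ
  | .hole => ∅
  | .appR v _ E => v.fv ∪ E.fv
  | .appL E u => E.fv ∪ u.fv

/-- Composition of pure contexts: `(E.comp E').plug t = E.plug (E'.plug t)`. -/
def ECtx.comp : ECtx → ECtx → ECtx
  | .hole, E' => E'
  | .appR v hv E, E' => .appR v hv (E.comp E')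
  | .appL E u, E' => .appL (E.comp E') u

/-- Evaluation contexts F ::= □ | v F | F t | ⟨F⟩. -/
inductive FCtx : Type
  | hole : FCtx
  | appR : (v : Tm) → IsValue v → FCtx → FCtx
  | appL : FCtx → Tm → FCtx
  | reset : FCtx → FCtx

def FCtx.plug : FCtx → Tm → Tm
  | .hole, t => t
  | .appR v _ F, t => Tm.app v (F.plug t)
  | .appL F u, t => Tm.app (F.plug t) u
  | .reset F, t => Tm.reset (F.plug t)

def FCtx.fv : FCtx → Finset ℕ
  | .hole => ∅
  | .appR v _ F => v.fv ∪ F.fv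
  | .appL F u => F.fv ∪ u.fv
  | .reset F => F.fv

/-- The function `λx.⟨E[x]⟩` representing the captured delimited context `E`,
where `x` is chosen fresh (in particular `x ∉ fv E`). -/
def contFun (E : ECtx) : Tm :=
  Tm.lam (fresh E.fv) (Tm.reset (E.plug (Tm.var (fresh E.fv))))

/-- Call-by-value reduction →_v of λ_S. -/
inductive Red : Tm → Tm → Prop
  | beta (F : FCtx) (x : ℕ) (t v : Tm) :
      IsValue v →
      Red (F.plug (Tm.app (Tm.lam x t) v)) (F.plug (t.subst x v))
  | capture (F : FCtx) (E : ECtx) (k : ℕ) (t : Tm) :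
      Red (F.plug (Tm.reset (E.plug (Tm.shift k t))))
          (F.plug (Tm.reset (t.subst k (contFun E))))
  | resetVal (F : FCtx) (v : Tm) :
      IsValue v →
      Red (F.plug (Tm.reset v)) (F.plug v)

/-- A stuck term: not a value and unable to reduce. -/
def Stuck (t : Tm) : Prop := ¬ IsValue t ∧ ∀ t', ¬ Red t t'

/-- Normal forms: values and stuck terms. -/
def NormalForm (t : Tm) : Prop := IsValue t ∨ Stuck t

/-- A control-stuck term has the form E[S k.t]. -/
def ControlStuck (t : Tm) : Prop :=
  ∃ (E : ECtx) (k : ℕ) (s : Tm), t = E.plug (Tm.shift k s)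

/-- Evaluation: `t ⇓ t'` iff `t →_v* t'` and `t'` is a normal form. -/
def Evals (t t' : Tm) : Prop := Relation.ReflTransGen Red t t' ∧ NormalForm t'

/-- `t` evaluates to some value. -/
def EvalsToValue (t : Tm) : Prop := ∃ v, Relation.ReflTransGen Red t v ∧ IsValue v

/-- `t` evaluates to some control-stuck term. -/
def EvalsToStuck (t : Tm) : Prop :=
  ∃ s, Relation.ReflTransGen Red t s ∧ ControlStuck s

/-- General contexts C ::= □ | λx.C | t C | C t | S k.C | ⟨C⟩. -/
inductive Ctx : Type
  | hole : Ctx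
  | lam : ℕ → Ctx → Ctx
  | appL : Ctx → Tm → Ctx
  | appR : Tm → Ctx → Ctx
  | shift : ℕ → Ctx → Ctx
  | reset : Ctx → Ctx

def Ctx.plug : Ctx → Tm → Tm
  | .hole, t => t
  | .lam x C, t => Tm.lam x (C.plug t)
  | .appL C u, t => Tm.app (C.plug t) u
  | .appR u C, t => Tm.app u (C.plug t)
  | .shift k C, t => Tm.shift k (C.plug t)
  | .reset C, t => Tm.reset (C.plug t)

def Ctx.fv : Ctx → Finset ℕ
  | .hole => ∅
  | .lam x C => C.fv \ {x}
  | .appL C u => C.fv ∪ u.fv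
  | .appR u C => u.fv ∪ C.fv
  | .shift k C => C.fv \ {k}
  | .reset C => C.fv

/-- Contextual equivalence ≈ for the relaxed semantics (on closed terms):
tests evaluation to values and evaluation to control-stuck terms in every
closed context. -/
def CtxEquiv (t0 t1 : Tm) : Prop :=
  ∀ C : Ctx, C.fv = ∅ →
    (EvalsToValue (C.plug t0) ↔ EvalsToValue (C.plug t1)) ∧
    (EvalsToStuck (C.plug t0) ↔ EvalsToStuck (C.plug t1))

/-- Contextual equivalence ≈_p for the original semantics: tests evaluation to
values of ⟨C[·]⟩ in every closed context C. -/
def CtxEquivP (t0 t1 : Tm) : Prop :=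
  ∀ C : Ctx, C.fv = ∅ →
    (EvalsToValue (Tm.reset (C.plug t0)) ↔ EvalsToValue (Tm.reset (C.plug t1)))

/-- Contextual equivalence ≈_E testing only with closed evaluation contexts. -/
def ECtxEquiv (t0 t1 : Tm) : Prop :=
  ∀ F : FCtx, F.fv = ∅ →
    (EvalsToValue (F.plug t0) ↔ EvalsToValue (F.plug t1)) ∧
    (EvalsToStuck (F.plug t0) ↔ EvalsToStuck (F.plug t1))

/-- Applicative simulation. -/
def IsAppSim (R : Tm → Tm → Prop) : Prop :=
  ∀ t0 t1, R t0 t1 →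
    (∀ t0', Red t0 t0' →
      ∃ t1', Relation.ReflTransGen Red t1 t1' ∧ R t0' t1') ∧
    (∀ x t0', t0 = Tm.lam x t0' →
      ∃ t1', Relation.ReflTransGen Red t1 (Tm.lam x t1') ∧
        ∀ v, IsValue v → Closed v → R (t0'.subst x v) (t1'.subst x v)) ∧
    (∀ (E0 : ECtx) (k : ℕ) (t0' : Tm), t0 = E0.plug (Tm.shift k t0') →
      ∃ (E1 : ECtx) (t1' : Tm),
        Relation.ReflTransGen Red t1 (E1.plug (Tm.shift k t1')) ∧
        ∀ E : ECtx, E.fv = ∅ →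
          R (Tm.reset (t0'.subst k (contFun (E.comp E0))))
            (Tm.reset (t1'.subst k (contFun (E.comp E1)))))

/-- Applicative bisimulation. -/
def IsAppBisim (R : Tm → Tm → Prop) : Prop :=
  IsAppSim R ∧ IsAppSim (fun a b => R b a)

/-- Applicative bisimilarity ≈_app: the largest applicative bisimulation. -/
def AppBisim (t0 t1 : Tm) : Prop := ∃ R, IsAppBisim R ∧ R t0 t1

/-- Simultaneous substitution (used only with closing substitutions mapping
variables to closed values, so no capture can occur). -/
def Tm.msubst : Tm → (ℕ → Tm) → Tm
  | .var x, σ => σ x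
  | .lam x t, σ => Tm.lam x (t.msubst (Function.update σ x (Tm.var x)))
  | .app t u, σ => Tm.app (t.msubst σ) (u.msubst σ)
  | .shift k t, σ => Tm.shift k (t.msubst (Function.update σ k (Tm.var k)))
  | .reset t, σ => Tm.reset (t.msubst σ)

/-- Open extension of a relation on closed terms: relate `t0σ` and `t1σ` for
every substitution σ mapping variables to closed values. -/
def OpenExt (R : Tm → Tm → Prop) (t0 t1 : Tm) : Prop :=
  ∀ σ : ℕ → Tm, (∀ x, IsValue (σ x) ∧ Closed (σ x)) →
    R (t0.msubst σ) (t1.msubst σ)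

/-- ω := λx.x x. -/
def omegaTm : Tm := Tm.lam 0 (Tm.app (Tm.var 0) (Tm.var 0))

/-- Ω := ω ω, a diverging term. -/
def OmegaTm : Tm := Tm.app omegaTm omegaTm


/-- Structural description of control-stuck terms. -/
def Cs : Tm → Prop
  | .var _ => False
  | .lam _ _ => False
  | .app t u => Cs t ∨ (IsValue t ∧ Cs u)
  | .shift _ _ => True
  | .reset _ => False

/-- Structural description of open-stuck terms. -/
def Os : Tm → Prop
  | .var _ => False
  | .lam _ _ => False
  | .app t u => Os t ∨ (IsValue t ∧ Os u) ∨ ((∃ x, t = .var x) ∧ IsValue u)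
  | .shift _ _ => False
  | .reset t => Os t

/-- Structural description of reducible terms. -/
def Rd : Tm → Prop
  | .var _ => False
  | .lam _ _ => False
  | .app t u => Rd t ∨ (IsValue t ∧ Rd u) ∨ ((∃ x s, t = .lam x s) ∧ IsValue u)
  | .shift _ _ => False
  | .reset t => Rd t ∨ IsValue t ∨ Cs t

theorem isValue_iff (t : Tm) : IsValue t ↔ (∃ x, t = .var x) ∨ (∃ x s, t = .lam x s) := by
  constructor
  · rintro (x | ⟨x, s⟩) <;> simp
  · rintro (⟨x, rfl⟩ | ⟨x, s, rfl⟩) <;> constructor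

theorem classify (t : Tm) : (IsValue t ∨ Cs t ∨ Os t ∨ Rd t) ∧
    ¬ (IsValue t ∧ Cs t) ∧ ¬ (IsValue t ∧ Os t) ∧ ¬ (IsValue t ∧ Rd t) ∧
    ¬ (Cs t ∧ Rd t) ∧ ¬ (Os t ∧ Rd t) ∧ ¬ (Cs t ∧ Os t) := by
  induction t with
  | var x => simp [isValue_iff, Cs, Os, Rd]
  | lam x t => simp [isValue_iff, Cs, Os, Rd]
  | shift x t => simp [isValue_iff, Cs, Os, Rd]
  | app t u iht ihu =>
    have h0 : ¬ IsValue (Tm.app t u) := by simp [isValue_iff]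
    have h1 := isValue_iff t
    have h2 : ¬ ((∃ x, t = .var x) ∧ (∃ x s, t = .lam x s)) := by
      rintro ⟨⟨x, rfl⟩, ⟨y, s, h⟩⟩; cases h
    simp only [Cs, Os, Rd]
    generalize (∃ x, t = .var x) = A at *
    generalize (∃ x s, t = .lam x s) = B at *
    grind
  | reset t ih =>
    have h0 : ¬ IsValue (Tm.reset t) := by simp [isValue_iff]
    simp only [Cs, Os, Rd]
    grind

theorem cs_iff (t : Tm) :
    (∃ (E : ECtx) (k : ℕ) (t' : Tm), t = E.plug (Tm.shift k t')) ↔ Cs t := by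
  constructor
  · rintro ⟨E, k, s, rfl⟩
    induction E with
    | hole => simp [ECtx.plug, Cs]
    | appR v hv E ih => exact Or.inr ⟨hv, ih⟩
    | appL E u ih => exact Or.inl ih
  · intro h
    induction t with
    | var x => exact h.elim
    | lam x t => exact h.elim
    | reset t => exact h.elim
    | shift k t => exact ⟨.hole, k, t, rfl⟩
    | app t u iht ihu =>
      rcases h with h | ⟨hv, h⟩
      · obtain ⟨E, k, s, rfl⟩ := iht h
        exact ⟨.appL E u, k, s, rfl⟩
      · obtain ⟨E, k, s, rfl⟩ := ihu h
        exact ⟨.appR t hv E, k, s, rfl⟩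

theorem os_iff (t : Tm) :
    (∃ (F : FCtx) (x : ℕ) (v : Tm), IsValue v ∧ t = F.plug (Tm.app (Tm.var x) v)) ↔ Os t := by
  constructor
  · rintro ⟨F, x, v, hv, rfl⟩
    induction F with
    | hole => exact Or.inr (Or.inr ⟨⟨x, rfl⟩, hv⟩)
    | appR w hw F ih => exact Or.inr (Or.inl ⟨hw, ih⟩)
    | appL F u ih => exact Or.inl ih
    | reset F ih => exact ih
  · intro h
    induction t with
    | var x => exact h.elim
    | lam x t => exact h.elim
    | shift k t => exact h.elim
    | reset t ih =>
      obtain ⟨F, x, v, hv, rfl⟩ := ih h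
      exact ⟨.reset F, x, v, hv, rfl⟩
    | app t u iht ihu =>
      rcases h with h | ⟨hw, h⟩ | ⟨⟨x, rfl⟩, hv⟩
      · obtain ⟨F, x, v, hv, rfl⟩ := iht h
        exact ⟨.appL F u, x, v, hv, rfl⟩
      · obtain ⟨F, x, v, hv, rfl⟩ := ihu h
        exact ⟨.appR t hw F, x, v, hv, rfl⟩
      · exact ⟨.hole, x, u, hv, rfl⟩

theorem rd_plug (F : FCtx) (t : Tm) (h : Rd t) : Rd (F.plug t) := by
  induction F with
  | hole => exact h
  | appR w hw F ih => exact Or.inr (Or.inl ⟨hw, ih⟩)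
  | appL F u ih => exact Or.inl ih
  | reset F ih => exact Or.inl ih

/-- Composition of evaluation contexts. -/
def fcomp : FCtx → FCtx → FCtx
  | .hole, G => G
  | .appR v hv F, G => .appR v hv (fcomp F G)
  | .appL F u, G => .appL (fcomp F G) u
  | .reset F, G => .reset (fcomp F G)

theorem fcomp_plug (F G : FCtx) (t : Tm) : (fcomp F G).plug t = F.plug (G.plug t) := by
  induction F <;> simp_all [fcomp, FCtx.plug]

theorem red_plug (F : FCtx) {t t' : Tm} (h : Red t t') : Red (F.plug t) (F.plug t') := by
  cases h with
  | beta G x t v hv => simpa only [fcomp_plug] using Red.beta (fcomp F G) x t v hv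
  | capture G E k t => simpa only [fcomp_plug] using Red.capture (fcomp F G) E k t
  | resetVal G v hv => simpa only [fcomp_plug] using Red.resetVal (fcomp F G) v hv

theorem rd_iff (t : Tm) : (∃ t', Red t t') ↔ Rd t := by
  constructor
  · rintro ⟨t', h⟩
    cases h with
    | beta F x s v hv => exact rd_plug F _ (Or.inr (Or.inr ⟨⟨x, s, rfl⟩, hv⟩))
    | capture F E k s => exact rd_plug F _ (Or.inr (Or.inr ((cs_iff _).1 ⟨E, k, s, rfl⟩)))
    | resetVal F v hv => exact rd_plug F _ (Or.inr (Or.inl hv))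
  · intro h
    induction t with
    | var x => exact h.elim
    | lam x t => exact h.elim
    | shift k t => exact h.elim
    | reset t ih =>
      rcases h with h | h | h
      · obtain ⟨t', h⟩ := ih h
        exact ⟨_, red_plug (.reset .hole) h⟩
      · exact ⟨_, Red.resetVal .hole t h⟩
      · obtain ⟨E, k, s, rfl⟩ := (cs_iff _).2 h
        exact ⟨_, Red.capture .hole E k s⟩
    | app t u iht ihu =>
      rcases h with h | ⟨hw, h⟩ | ⟨⟨x, s, rfl⟩, hv⟩
      · obtain ⟨t', h⟩ := iht h
        exact ⟨_, red_plug (.appL .hole u) h⟩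
      · obtain ⟨t', h⟩ := ihu h
        exact ⟨_, red_plug (.appR t hw .hole) h⟩
      · exact ⟨_, Red.beta .hole x s u hv⟩

/-- A term `t` is stuck iff it is a control-stuck term
`E[S k.t']` or an open-stuck term `F[x v]`. -/
theorem stuck_characterization (t : Tm) :
    Stuck t ↔
      (∃ (E : ECtx) (k : ℕ) (t' : Tm), t = E.plug (Tm.shift k t')) ∨
      (∃ (F : FCtx) (x : ℕ) (v : Tm), IsValue v ∧ t = F.plug (Tm.app (Tm.var x) v)) := by
  rw [cs_iff, os_iff, Stuck, ← not_exists, rd_iff]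
  have := classify t
  tauto

end LambdaS
end

section
/- For every term t of the calculus λ_S, either t is a normal form, or there exist a unique redex r and a unique evaluation context F such that t = F[r]. Consequently the reduction relation →_v is deterministic. -/
namespace LambdaS

/-- Redexes: `(λx.t) v`, `⟨E[S k.t]⟩`, and `⟨v⟩`. -/
def IsRedex (r : Tm) : Prop :=
  (∃ (x : ℕ) (t v : Tm), IsValue v ∧ r = Tm.app (Tm.lam x t) v) ∨
  (∃ (E : ECtx) (k : ℕ) (t : Tm), r = Tm.reset (E.plug (Tm.shift k t))) ∨
  (∃ v : Tm, IsValue v ∧ r = Tm.reset v)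

theorem redex_not_value {r : Tm} (h : IsRedex r) : ¬ IsValue r := by
  rintro hv
  rcases h with ⟨x, t, v, _, rfl⟩ | ⟨E, k, t, rfl⟩ | ⟨v, _, rfl⟩ <;> cases hv

theorem plug_not_value {r : Tm} (h : ¬ IsValue r) (F : FCtx) : ¬ IsValue (F.plug r) := by
  intro hv
  cases F with
  | hole => exact h hv
  | _ => simp only [FCtx.plug] at hv; cases hv

theorem eplug_not_value (E : ECtx) (k : ℕ) (t : Tm) : ¬ IsValue (E.plug (Tm.shift k t)) := by
  intro hv
  cases E <;> simp only [ECtx.plug] at hv <;> cases hv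

theorem eplug_ne_redex (E : ECtx) (k : ℕ) (t : Tm) :
    ∀ (F : FCtx) (r : Tm), IsRedex r → E.plug (Tm.shift k t) ≠ F.plug r := by
  induction E with
  | hole =>
    intro F r hr he
    cases F with
    | hole =>
      simp only [ECtx.plug, FCtx.plug] at he
      subst he
      rcases hr with ⟨x, t, v, _, h⟩ | ⟨E, k, t, h⟩ | ⟨v, _, h⟩ <;> cases h
    | _ => simp [ECtx.plug, FCtx.plug] at he
  | appR w hw E ih =>
    intro F r hr he
    cases F with
    | hole =>
      simp only [ECtx.plug, FCtx.plug] at he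
      subst he
      rcases hr with ⟨x, t', v, hv, h⟩ | ⟨E, k, t, h⟩ | ⟨v, _, h⟩
      · injection h with h1 h2
        exact eplug_not_value E k t (h2 ▸ hv)
      · cases h
      · cases h
    | appR w' hw' F =>
      simp only [ECtx.plug, FCtx.plug, Tm.app.injEq] at he
      exact ih F r hr he.2
    | appL F u =>
      simp only [ECtx.plug, FCtx.plug, Tm.app.injEq] at he
      exact plug_not_value (redex_not_value hr) F (he.1 ▸ hw)
    | reset F => simp [ECtx.plug, FCtx.plug] at he
  | appL E u ih =>
    intro F r hr he
    cases F with
    | hole =>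
      simp only [ECtx.plug, FCtx.plug] at he
      subst he
      rcases hr with ⟨x, t', v, hv, h⟩ | ⟨E, k, t, h⟩ | ⟨v, _, h⟩
      · injection h with h1 h2
        exact eplug_not_value E k t (h1 ▸ IsValue.lam x t')
      · cases h
      · cases h
    | appR w' hw' F =>
      simp only [ECtx.plug, FCtx.plug, Tm.app.injEq] at he
      exact eplug_not_value E k t (he.1 ▸ hw')
    | appL F u =>
      simp only [ECtx.plug, FCtx.plug, Tm.app.injEq] at he
      exact ih F r hr he.1
    | reset F => simp [ECtx.plug, FCtx.plug] at he

theorem eplug_unique (E : ECtx) (k : ℕ) (t : Tm) :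
    ∀ (E' : ECtx) (k' : ℕ) (t' : Tm), E.plug (Tm.shift k t) = E'.plug (Tm.shift k' t') →
      E = E' ∧ k = k' ∧ t = t' := by
  induction E with
  | hole =>
    intro E' k' t' he
    cases E' <;> simp_all [ECtx.plug]
  | appR w hw E ih =>
    intro E' k' t' he
    cases E' with
    | hole => simp [ECtx.plug] at he
    | appR w' hw' E' =>
      simp only [ECtx.plug, Tm.app.injEq] at he
      obtain ⟨rfl, he⟩ := he
      obtain ⟨rfl, h⟩ := ih _ _ _ he
      exact ⟨rfl, h⟩
    | appL E' u =>
      simp only [ECtx.plug, Tm.app.injEq] at he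
      exact absurd (he.1 ▸ hw) (eplug_not_value E' k' t')
  | appL E u ih =>
    intro E' k' t' he
    cases E' with
    | hole => simp [ECtx.plug] at he
    | appR w' hw' E' =>
      simp only [ECtx.plug, Tm.app.injEq] at he
      exact absurd (he.1 ▸ hw') (eplug_not_value E k t)
    | appL E' u =>
      simp only [ECtx.plug, Tm.app.injEq] at he
      obtain ⟨he, rfl⟩ := he
      obtain ⟨rfl, h⟩ := ih _ _ _ he
      exact ⟨rfl, h⟩

/-- A redex only decomposes trivially. -/
theorem redex_decomp {r : Tm} (hr : IsRedex r) (F : FCtx) (r' : Tm) (hr' : IsRedex r')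
    (he : r = F.plug r') : F = .hole := by
  have hn := redex_not_value hr'
  cases F with
  | hole => rfl
  | appR w hw F =>
    exfalso
    rcases hr with ⟨x, t, v, hv, rfl⟩ | ⟨E, k, t, rfl⟩ | ⟨v, hv, rfl⟩ <;>
      simp only [FCtx.plug, Tm.app.injEq, reduceCtorEq] at he
    exact plug_not_value hn F (he.2 ▸ hv)
  | appL F u =>
    exfalso
    rcases hr with ⟨x, t, v, hv, rfl⟩ | ⟨E, k, t, rfl⟩ | ⟨v, hv, rfl⟩ <;>
      simp only [FCtx.plug, Tm.app.injEq, reduceCtorEq] at he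
    exact plug_not_value hn F (he.1 ▸ IsValue.lam x t)
  | reset F =>
    exfalso
    rcases hr with ⟨x, t, v, hv, rfl⟩ | ⟨E, k, t, rfl⟩ | ⟨v, hv, rfl⟩ <;>
      simp only [FCtx.plug, Tm.reset.injEq, reduceCtorEq] at he
    · exact eplug_ne_redex E k t F r' hr' he
    · exact plug_not_value hn F (he ▸ hv)

theorem fplug_unique (F : FCtx) (r : Tm) (hr : IsRedex r) :
    ∀ (F' : FCtx) (r' : Tm), IsRedex r' → F.plug r = F'.plug r' → F = F' ∧ r = r' := by
  have hn := redex_not_value hr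
  induction F with
  | hole =>
    intro F' r' hr' he
    have := redex_decomp hr F' r' hr' he
    subst this
    exact ⟨rfl, he⟩
  | appR w hw F ih =>
    intro F' r' hr' he
    have hn' := redex_not_value hr'
    cases F' with
    | hole => exact absurd (redex_decomp hr' _ r hr he.symm) (by simp)
    | appR w' hw' F' =>
      simp only [FCtx.plug, Tm.app.injEq] at he
      obtain ⟨rfl, he⟩ := he
      obtain ⟨rfl, h⟩ := ih _ _ hr' he
      exact ⟨rfl, h⟩
    | appL F' u =>
      simp only [FCtx.plug, Tm.app.injEq] at he
      exact absurd (he.1 ▸ hw) (plug_not_value hn' F')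
    | reset F' => simp [FCtx.plug] at he
  | appL F u ih =>
    intro F' r' hr' he
    cases F' with
    | hole => exact absurd (redex_decomp hr' _ r hr he.symm) (by simp)
    | appR w' hw' F' =>
      simp only [FCtx.plug, Tm.app.injEq] at he
      exact absurd (he.1 ▸ hw') (plug_not_value hn F)
    | appL F' u =>
      simp only [FCtx.plug, Tm.app.injEq] at he
      obtain ⟨he, rfl⟩ := he
      obtain ⟨rfl, h⟩ := ih _ _ hr' he
      exact ⟨rfl, h⟩
    | reset F' => simp [FCtx.plug] at he
  | reset F ih =>
    intro F' r' hr' he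
    cases F' with
    | hole => exact absurd (redex_decomp hr' _ r hr he.symm) (by simp)
    | reset F' =>
      simp only [FCtx.plug, Tm.reset.injEq] at he
      obtain ⟨rfl, h⟩ := ih _ _ hr' he
      exact ⟨rfl, h⟩
    | _ => simp [FCtx.plug] at he

/-- Contraction of a redex at top level. -/
inductive Contr : Tm → Tm → Prop
  | beta (x : ℕ) (t v : Tm) : IsValue v → Contr (Tm.app (Tm.lam x t) v) (t.subst x v)
  | capture (E : ECtx) (k : ℕ) (t : Tm) :
      Contr (Tm.reset (E.plug (Tm.shift k t))) (Tm.reset (t.subst k (contFun E)))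
  | resetVal (v : Tm) : IsValue v → Contr (Tm.reset v) v

theorem Contr.isRedex {r s : Tm} (h : Contr r s) : IsRedex r := by
  cases h with
  | beta x t v hv => exact Or.inl ⟨x, t, _, hv, rfl⟩
  | capture E k t => exact Or.inr (Or.inl ⟨E, k, t, rfl⟩)
  | resetVal _ hv => exact Or.inr (Or.inr ⟨_, hv, rfl⟩)

theorem Contr.det {r s s' : Tm} (h : Contr r s) (h' : Contr r s') : s = s' := by
  rcases h with ⟨x, t, v, hv⟩ | ⟨E, k, t⟩ | ⟨v, hv⟩
  · cases h'
    rfl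
  · generalize hq : Tm.reset (E.plug (Tm.shift k t)) = q at h'
    rcases h' with ⟨x, t', v, hv⟩ | ⟨E', k', t'⟩ | ⟨v, hv⟩
    · cases hq
    · injection hq with hq
      obtain ⟨rfl, rfl, rfl⟩ := eplug_unique _ _ _ _ _ _ hq
      rfl
    · injection hq with hq
      exact absurd (hq ▸ hv) (eplug_not_value E k t)
  · generalize hq : Tm.reset s = q at h'
    rcases h' with ⟨x, t', v, hv'⟩ | ⟨E', k', t'⟩ | ⟨v, hv'⟩
    · cases hq
    · injection hq with hq
      exact absurd (hq ▸ hv) (eplug_not_value E' k' t')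
    · injection hq with hq

theorem Red.decomp {t t' : Tm} (h : Red t t') :
    ∃ F r s, Contr r s ∧ t = FCtx.plug F r ∧ t' = FCtx.plug F s := by
  cases h with
  | beta F x t v hv => exact ⟨F, _, _, .beta x t v hv, rfl, rfl⟩
  | capture F E k t => exact ⟨F, _, _, .capture E k t, rfl, rfl⟩
  | resetVal F v hv => exact ⟨F, _, _, .resetVal v hv, rfl, rfl⟩

/-- Unique decomposition: every term is a normal form or decomposes
uniquely as `F[r]` with `r` a redex; consequently reduction is deterministic. -/
theorem unique_decomposition_and_determinism :
    (∀ t : Tm, NormalForm t ∨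
      ∃! p : Tm × FCtx, IsRedex p.1 ∧ t = p.2.plug p.1) ∧
    (∀ t t1 t2 : Tm, Red t t1 → Red t t2 → t1 = t2) := by
  constructor
  · intro t
    by_cases hN : NormalForm t
    · exact Or.inl hN
    · right
      simp only [NormalForm, Stuck, not_or, not_and, not_forall, not_not] at hN
      obtain ⟨t', ht'⟩ := hN.2 hN.1
      obtain ⟨F, r, s, hc, rfl, -⟩ := ht'.decomp
      refine ⟨(r, F), ⟨hc.isRedex, rfl⟩, ?_⟩
      rintro ⟨r', F'⟩ ⟨hr', he⟩
      obtain ⟨rfl, rfl⟩ := fplug_unique F r hc.isRedex F' r' hr' he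
      rfl
  · intro t t1 t2 h1 h2
    obtain ⟨F, r, s, hc, rfl, rfl⟩ := h1.decomp
    obtain ⟨F', r', s', hc', he, rfl⟩ := h2.decomp
    obtain ⟨rfl, rfl⟩ := fplug_unique F r hc.isRedex F' r' hc'.isRedex he
    rw [hc.det hc']

end LambdaS
end

section
/- In the calculus λ_S, if ⟨t⟩ evaluates to a normal form t' (i.e., ⟨t⟩ →_v* t' with t' a normal form), then t' is a value or an open-stuck term of the form ⟨F[x v]⟩. In particular, if t is closed, then t' can only be a closed value. -/
namespace LambdaS

theorem fv_rename (t : Tm) (y z : ℕ) : (t.rename y z).fv ⊆ (t.fv \ {y}) ∪ {z} := by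
  induction t with
  | var w => simp only [Tm.rename]; split <;> simp_all [Tm.fv]
  | lam w t ih =>
    simp only [Tm.rename]
    split <;> intro a ha <;> have := @ih a <;> simp_all [Tm.fv] <;> tauto
  | app t u iht ihu =>
    intro a ha
    have h1 := @iht a
    have h2 := @ihu a
    simp_all [Tm.fv, Tm.rename]
    tauto
  | shift w t ih =>
    simp only [Tm.rename]
    split <;> intro a ha <;> have := @ih a <;> simp_all [Tm.fv] <;> tauto
  | reset t ih => simpa [Tm.fv, Tm.rename] using ih

theorem fv_subst (n : ℕ) : ∀ (t : Tm) (x : ℕ) (v : Tm), t.size ≤ n →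
    (t.subst x v).fv ⊆ (t.fv \ {x}) ∪ v.fv := by
  induction n with
  | zero => intro t x v h; cases t <;> simp [Tm.size] at h
  | succ n ih =>
    intro t x v h a ha
    cases t with
    | var w =>
      rw [Tm.subst] at ha
      split at ha <;> simp_all [Tm.fv]
    | lam y t =>
      have hs : t.size ≤ n := by simp [Tm.size] at h; omega
      rw [Tm.subst] at ha
      split at ha
      · simp_all [Tm.fv]
      · split at ha
        · generalize fresh (v.fv ∪ t.fv ∪ {x}) = z at ha
          have h1 := @ih (t.rename y z) x v (by rw [Tm.size_rename]; exact hs) a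
          have h2 := @fv_rename t y z a
          simp only [Tm.fv, Finset.mem_union, Finset.mem_sdiff, Finset.mem_singleton] at *
          tauto
        · have h1 := @ih t x v hs a
          simp only [Tm.fv, Finset.mem_union, Finset.mem_sdiff, Finset.mem_singleton] at *
          tauto
    | app t u =>
      have h1 := @ih t x v (by simp [Tm.size] at h; omega) a
      have h2 := @ih u x v (by simp [Tm.size] at h; omega) a
      rw [Tm.subst] at ha
      simp only [Tm.fv, Finset.mem_union, Finset.mem_sdiff, Finset.mem_singleton] at *
      tauto
    | shift y t =>
      have hs : t.size ≤ n := by simp [Tm.size] at h; omega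
      rw [Tm.subst] at ha
      split at ha
      · simp_all [Tm.fv]
      · split at ha
        · generalize fresh (v.fv ∪ t.fv ∪ {x}) = z at ha
          have h1 := @ih (t.rename y z) x v (by rw [Tm.size_rename]; exact hs) a
          have h2 := @fv_rename t y z a
          simp only [Tm.fv, Finset.mem_union, Finset.mem_sdiff, Finset.mem_singleton] at *
          tauto
        · have h1 := @ih t x v hs a
          simp only [Tm.fv, Finset.mem_union, Finset.mem_sdiff, Finset.mem_singleton] at *
          tauto
    | reset t =>
      have h1 := @ih t x v (by simp [Tm.size] at h; omega) a
      rw [Tm.subst] at ha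
      exact h1 ha

theorem ECtx.fv_plug (E : ECtx) (t : Tm) : (E.plug t).fv = E.fv ∪ t.fv := by
  induction E with
  | hole => simp [ECtx.plug, ECtx.fv]
  | appR v hv E ih => simp [ECtx.plug, ECtx.fv, Tm.fv, ih]
  | appL E u ih =>
    simp only [ECtx.plug, ECtx.fv, Tm.fv, ih]
    ext a; simp only [Finset.mem_union]; tauto

theorem FCtx.fv_plug (F : FCtx) (t : Tm) : (F.plug t).fv = F.fv ∪ t.fv := by
  induction F with
  | hole => simp [FCtx.plug, FCtx.fv]
  | appR v hv E ih => simp [FCtx.plug, FCtx.fv, Tm.fv, ih]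
  | appL E u ih =>
    simp only [FCtx.plug, FCtx.fv, Tm.fv, ih]
    ext a; simp only [Finset.mem_union]; tauto
  | reset F ih => simpa [FCtx.plug, FCtx.fv, Tm.fv] using ih

theorem fv_contFun (E : ECtx) : (contFun E).fv ⊆ E.fv := by
  intro a ha
  simp only [contFun, Tm.fv, ECtx.fv_plug, Finset.mem_union, Finset.mem_sdiff,
    Finset.mem_singleton] at ha
  tauto

theorem Red.fv_subset {t t' : Tm} (h : Red t t') : t'.fv ⊆ t.fv := by
  cases h with
  | beta F x t v hv =>
    rw [FCtx.fv_plug, FCtx.fv_plug]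
    exact Finset.union_subset_union_right (fv_subst _ t x v le_rfl)
  | capture F E k t =>
    rw [FCtx.fv_plug, FCtx.fv_plug]
    refine Finset.union_subset_union_right ?_
    intro a ha
    have h1 := @fv_subst _ t k (contFun E) le_rfl a ha
    have h2 := @fv_contFun E a
    simp only [Tm.fv, ECtx.fv_plug, Finset.mem_union, Finset.mem_sdiff,
      Finset.mem_singleton] at *
    tauto
  | resetVal F v hv => rw [FCtx.fv_plug, FCtx.fv_plug]; exact subset_rfl

theorem Red.appL {t t' : Tm} (h : Red t t') (u : Tm) : Red (t.app u) (t'.app u) := by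
  cases h with
  | beta F x t v hv => exact Red.beta (.appL F u) x t v hv
  | capture F E k t => exact Red.capture (.appL F u) E k t
  | resetVal F v hv => exact Red.resetVal (.appL F u) v hv

theorem Red.appR {t t' : Tm} (h : Red t t') (u : Tm) (hu : IsValue u) :
    Red (u.app t) (u.app t') := by
  cases h with
  | beta F x t v hv => exact Red.beta (.appR u hu F) x t v hv
  | capture F E k t => exact Red.capture (.appR u hu F) E k t
  | resetVal F v hv => exact Red.resetVal (.appR u hu F) v hv

theorem Red.reset {t t' : Tm} (h : Red t t') : Red t.reset t'.reset := by
  cases h with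
  | beta F x t v hv => exact Red.beta (.reset F) x t v hv
  | capture F E k t => exact Red.capture (.reset F) E k t
  | resetVal F v hv => exact Red.resetVal (.reset F) v hv

def OpenStuck (t : Tm) : Prop :=
  ∃ (F : FCtx) (x : ℕ) (v : Tm), IsValue v ∧ t = F.plug (Tm.app (Tm.var x) v)

theorem progress_reset {t : Tm}
    (h : IsValue t ∨ (∃ t', Red t t') ∨ ControlStuck t ∨ OpenStuck t) :
    (∃ t', Red t.reset t') ∨ OpenStuck t := by
  rcases h with h | ⟨t', h⟩ | ⟨E, k, s, rfl⟩ | h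
  · exact Or.inl ⟨_, Red.resetVal .hole t h⟩
  · exact Or.inl ⟨_, h.reset⟩
  · exact Or.inl ⟨_, Red.capture .hole E k s⟩
  · exact Or.inr h

/-- Progress (unique decomposition, existence part). -/
theorem progress (t : Tm) :
    IsValue t ∨ (∃ t', Red t t') ∨ ControlStuck t ∨ OpenStuck t := by
  induction t with
  | var x => exact Or.inl (.var x)
  | lam x t _ => exact Or.inl (.lam x t)
  | shift k t _ => exact Or.inr (Or.inr (Or.inl ⟨.hole, k, t, rfl⟩))
  | reset t ih =>
    rcases progress_reset ih with h | ⟨F, x, v, hv, rfl⟩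
    · exact Or.inr (Or.inl h)
    · exact Or.inr (Or.inr (Or.inr ⟨.reset F, x, v, hv, rfl⟩))
  | app t u iht ihu =>
    right
    rcases iht with ht | ⟨t', h⟩ | ⟨E, k, s, rfl⟩ | ⟨F, x, v, hv, rfl⟩
    · rcases ihu with hu | ⟨u', h⟩ | ⟨E, k, s, rfl⟩ | ⟨F, x, v, hv, rfl⟩
      · cases ht with
        | var x => exact Or.inr (Or.inr ⟨.hole, x, u, hu, rfl⟩)
        | lam x t => exact Or.inl ⟨_, Red.beta .hole x t u hu⟩
      · exact Or.inl ⟨_, h.appR t ht⟩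
      · exact Or.inr (Or.inl ⟨.appR t ht E, k, s, rfl⟩)
      · exact Or.inr (Or.inr ⟨.appR t ht F, x, v, hv, rfl⟩)
    · exact Or.inl ⟨_, h.appL u⟩
    · exact Or.inr (Or.inl ⟨.appL E u, k, s, rfl⟩)
    · exact Or.inr (Or.inr ⟨.appL F u, x, v, hv, rfl⟩)

theorem not_isValue_plug (F : FCtx) (t : Tm) (ht : ¬ IsValue t) : ¬ IsValue (F.plug t) := by
  cases F with
  | hole => exact ht
  | _ => intro h; cases h

theorem Red.not_isValue {t t' : Tm} (h : Red t t') : ¬ IsValue t := by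
  cases h <;> exact not_isValue_plug _ _ (by intro h; cases h)

theorem Red.reset_shape {s t t' : Tm} (h : Red t t') (hs : t = s.reset) :
    IsValue t' ∨ ∃ s', t' = Tm.reset s' := by
  cases h with
  | beta F x t v hv =>
    cases F <;> simp [FCtx.plug] at hs ⊢
  | capture F E k t =>
    cases F <;> simp [FCtx.plug] at hs ⊢
  | resetVal F v hv =>
    cases F <;> simp [FCtx.plug] at hs ⊢
    exact Or.inl hv

theorem shape_star {t t' : Tm} (h : Relation.ReflTransGen Red (Tm.reset t) t') :
    (IsValue t' ∨ ∃ s', t' = Tm.reset s') ∧ t'.fv ⊆ t.fv := by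
  induction h with
  | refl => exact ⟨Or.inr ⟨t, rfl⟩, subset_rfl⟩
  | tail _ hr ih =>
    refine ⟨?_, hr.fv_subset.trans ih.2⟩
    rcases ih.1 with hv | ⟨s, hs⟩
    · exact absurd hv hr.not_isValue
    · exact hr.reset_shape hs

/-- If `⟨t⟩` evaluates to a normal form `t'`, then `t'` is a value
or an open-stuck term of the form `⟨F[x v]⟩`; if moreover `t` is closed, then
`t'` can only be a closed value. -/
theorem eval_reset (t t' : Tm) (h : Evals (Tm.reset t) t') :
    (IsValue t' ∨
      ∃ (F : FCtx) (x : ℕ) (v : Tm),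
        IsValue v ∧ t' = Tm.reset (F.plug (Tm.app (Tm.var x) v))) ∧
    (Closed t → IsValue t' ∧ Closed t') := by
  obtain ⟨hstar, hnf⟩ := h
  obtain ⟨hshape, hfv⟩ := shape_star hstar
  have key : IsValue t' ∨ ∃ (F : FCtx) (x : ℕ) (v : Tm),
      IsValue v ∧ t' = Tm.reset (F.plug (Tm.app (Tm.var x) v)) := by
    rcases hnf with hv | hstuck
    · exact Or.inl hv
    · rcases hshape with hv | ⟨s, rfl⟩
      · exact Or.inl hv
      · rcases progress_reset (progress s) with ⟨s', hr⟩ | ⟨F, x, v, hv, rfl⟩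
        · exact absurd hr (hstuck.2 s')
        · exact Or.inr ⟨F, x, v, hv, rfl⟩
  refine ⟨key, fun hc => ?_⟩
  have hc' : t'.fv = ∅ := by
    unfold Closed at hc
    rw [hc] at hfv
    exact Finset.subset_empty.mp hfv
  refine ⟨?_, hc'⟩
  rcases key with hv | ⟨F, x, v, hv, rfl⟩
  · exact hv
  · exfalso
    have hx : x ∈ (Tm.reset (F.plug (Tm.app (Tm.var x) v))).fv := by
      simp [Tm.fv, FCtx.fv_plug]
    rw [hc'] at hx
    simp at hx

end LambdaS
end

section
/- In the calculus λ_S, the shift-reset axiom is validated by applicative bisimilarity: for every closed term S k.t, we have S k.⟨t⟩ ≈_app S k.t. -/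
namespace LambdaS

theorem Red.inReset {a b : Tm} (h : Red a b) : Red (Tm.reset a) (Tm.reset b) := by
  cases h with
  | beta F x t v hv => exact Red.beta (.reset F) x t v hv
  | capture F E k t => exact Red.capture (.reset F) E k t
  | resetVal F v hv => exact Red.resetVal (.reset F) v hv

theorem red_reset_inv {u t' : Tm} (h : Red (Tm.reset u) t') :
    (IsValue u ∧ t' = u) ∨
    (∃ (E : ECtx) (k : ℕ) (s u' : Tm), u = E.plug (Tm.shift k s) ∧ t' = Tm.reset u') ∨
    (∃ u', t' = Tm.reset u' ∧ Red u u') := by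
  generalize ha : Tm.reset u = a at h
  cases h with
  | beta F x t v hv =>
    cases F <;> simp only [FCtx.plug, Tm.reset.injEq, reduceCtorEq] at ha
    subst ha
    exact Or.inr (Or.inr ⟨_, rfl, Red.beta _ x t v hv⟩)
  | capture F E k t =>
    cases F <;> simp only [FCtx.plug, Tm.reset.injEq, reduceCtorEq] at ha
    · exact Or.inr (Or.inl ⟨E, k, t, _, ha, rfl⟩)
    · subst ha
      exact Or.inr (Or.inr ⟨_, rfl, Red.capture _ E k t⟩)
  | resetVal F v hv =>
    cases F <;> simp only [FCtx.plug, Tm.reset.injEq, reduceCtorEq] at ha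
    · subst ha
      exact Or.inl ⟨hv, rfl⟩
    · subst ha
      exact Or.inr (Or.inr ⟨_, rfl, Red.resetVal _ v hv⟩)

theorem not_red_shift {k : ℕ} {u t' : Tm} (h : Red (Tm.shift k u) t') : False := by
  generalize ha : Tm.shift k u = a at h
  cases h with
  | beta F x t v hv => cases F <;> simp [FCtx.plug] at ha
  | capture F E k t => cases F <;> simp [FCtx.plug] at ha
  | resetVal F v hv => cases F <;> simp [FCtx.plug] at ha

theorem reset_ne_plug_shift {E : ECtx} {k : ℕ} {u s : Tm}
    (h : Tm.reset u = E.plug (Tm.shift k s)) : False := by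
  cases E <;> simp [ECtx.plug] at h

/-- The bisimulation. -/
inductive SR : Tm → Tm → Prop
  | refl (t : Tm) : SR t t
  | rr (u : Tm) : SR (Tm.reset (Tm.reset u)) (Tm.reset u)
  | sr (k : ℕ) (t : Tm) : SR (Tm.shift k (Tm.reset t)) (Tm.shift k t)

theorem SR.bisim : IsAppBisim SR := by
  constructor
  · intro t0 t1 h
    cases h with
    | refl =>
      exact ⟨fun t' h => ⟨t', .single h, .refl _⟩,
        fun x t' h => ⟨t', h ▸ .refl, fun _ _ _ => .refl _⟩,
        fun E k t' h => ⟨E, t', h ▸ .refl, fun _ _ => .refl _⟩⟩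
    | rr u =>
      refine ⟨fun t' h => ?_, fun x t' h => by simp at h,
        fun E k t' h => (reset_ne_plug_shift h).elim⟩
      rcases red_reset_inv h with ⟨hv, _⟩ | ⟨E, k, s, u', he, _⟩ | ⟨u', rfl, hr⟩
      · cases hv
      · exact (reset_ne_plug_shift he).elim
      · rcases red_reset_inv hr with ⟨hv, rfl⟩ | ⟨E, k, s, w, _, rfl⟩ | ⟨w, rfl, _⟩
        · exact ⟨_, .refl, .refl _⟩
        · exact ⟨_, .single hr, .rr _⟩
        · exact ⟨_, .single hr, .rr _⟩
    | sr k t =>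
      refine ⟨fun t' h => (not_red_shift h).elim, fun x t' h => by simp at h, ?_⟩
      intro E0 k' t' h
      cases E0 <;> simp only [ECtx.plug, Tm.shift.injEq, reduceCtorEq] at h
      obtain ⟨rfl, rfl⟩ := h
      refine ⟨.hole, t, .refl, fun E _ => ?_⟩
      rw [Tm.subst]
      exact .rr _
  · intro t0 t1 h
    cases h with
    | refl =>
      exact ⟨fun t' h => ⟨t', .single h, .refl _⟩,
        fun x t' h => ⟨t', h ▸ .refl, fun _ _ _ => .refl _⟩,
        fun E k t' h => ⟨E, t', h ▸ .refl, fun _ _ => .refl _⟩⟩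
    | rr u =>
      refine ⟨fun t' h => ?_, fun x t' h => by simp at h,
        fun E k t' h => (reset_ne_plug_shift h).elim⟩
      rcases red_reset_inv h with ⟨hv, rfl⟩ | ⟨E, k, s, w, _, rfl⟩ | ⟨w, rfl, _⟩
      · exact ⟨_, .tail (.single h.inReset) h, .refl _⟩
      · exact ⟨_, .single h.inReset, .rr _⟩
      · exact ⟨_, .single h.inReset, .rr _⟩
    | sr k t =>
      refine ⟨fun t' h => (not_red_shift h).elim, fun x t' h => by simp at h, ?_⟩
      intro E0 k' t' h
      cases E0 <;> simp only [ECtx.plug, Tm.shift.injEq, reduceCtorEq] at h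
      obtain ⟨rfl, rfl⟩ := h
      refine ⟨.hole, Tm.reset t, .refl, fun E _ => ?_⟩
      rw [Tm.subst]
      exact .rr _

/-- The shift-reset axiom is validated by applicative
bisimilarity: for every closed term `S k.t`, `S k.⟨t⟩ ≈_app S k.t`. -/
theorem shift_reset_appBisim (k : ℕ) (t : Tm) (h : Closed (Tm.shift k t)) :
    AppBisim (Tm.shift k (Tm.reset t)) (Tm.shift k t) := by
  exact ⟨SR, SR.bisim, .sr k t⟩

end LambdaS
end
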